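/- Let m, n, N ≥ 1 be integers and p ∈ (0,1). Suppose there exist nonnegative integers c ≤ m/2 and d ≤ n/2 such that p^(C(m,2) − c(c−1)) · (2N)^(m−c) + (1−p)^(C(n,2) − d(d−1)) · (2N)^(n−d) ≤ 1/2, where C(k,2) = k(k−1)/2. Then r̃(m,n;p) > N; that is, every Builder strategy in the (m,n)-online Ramsey game against the random Painter with parameter p wins within N turns with probability less than 1/2. -/

import Mathlib

open scoped Classical

namespace OnlineRamseyGame

/-- A valid Builder strategy: it never builds a loop, and along any play the
edges built are pairwise distinct. -/
def ValidBuilder {V : Type*} (B : List Bool → Sym2 V) : Prop :=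
  (∀ h : List Bool, ¬ (B h).IsDiag) ∧
  ∀ h : List Bool, ∀ i : ℕ, i < h.length → B (h.take i) ≠ B h

/-- The history (as a list) of the first `t` values of the color sequence `x`. -/
def histSeq (x : ℕ → Bool) (t : ℕ) : List Bool := (List.range t).map x

/-- Extend a finite color sequence to an infinite one (by `false`). -/
def extSeq {N : ℕ} (x : Fin N → Bool) : ℕ → Bool :=
  fun t => if h : t < N then x ⟨t, h⟩ else false

/-- The probability of the outcome `x` when each turn is independently `true`
with probability `p` and `false` with probability `1 - p`. -/
noncomputable def weight (p : ℝ) {N : ℕ} (x : Fin N → Bool) : ℝ :=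
  ∏ i, if x i then p else 1 - p

/-- The graph built by `edge` contains a monochromatic clique on `k` vertices in
color `col` within the first `N` turns. -/
def HasMonoClique {V : Type*} (edge : ℕ → Sym2 V) (color : ℕ → Bool)
    (N k : ℕ) (col : Bool) : Prop :=
  ∃ S : Finset V, S.card = k ∧
    ∀ u ∈ S, ∀ v ∈ S, u ≠ v → ∃ t, t < N ∧ edge t = s(u, v) ∧ color t = col

/-- Builder strategy `B` wins the `(m,n)` game within `N` turns when Painter's
colors are given by the sequence `x` (red = `true`, blue = `false`). -/
def WinsOn (B : List Bool → Sym2 ℕ) (x : ℕ → Bool) (m n N : ℕ) : Prop :=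
  HasMonoClique (fun t => B (histSeq x t)) x N m true ∨
  HasMonoClique (fun t => B (histSeq x t)) x N n false

/-- The probability that Builder strategy `B` wins the `(m,n)` game within `N`
turns against the random Painter with parameter `p`. -/
noncomputable def winProb (B : List Bool → Sym2 ℕ) (m n N : ℕ) (p : ℝ) : ℝ :=
  ∑ x : Fin N → Bool, weight p x * (if WinsOn B (extSeq x) m n N then 1 else 0)

/-- The online Ramsey number `r̃(m,n;p)` against the random Painter with
parameter `p`: the least `N` such that some valid Builder strategy wins within
`N` turns with probability at least `1/2`. -/
noncomputable def onlineRamseyP (m n : ℕ) (p : ℝ) : ℕ :=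
  sInf {N | ∃ B : List Bool → Sym2 ℕ, ValidBuilder B ∧ (1 : ℝ) / 2 ≤ winProb B m n N p}

/-!
Split a monochromatic clique into `c` pairs and `m - 2c` single vertices, and mark both endpoints of
the edge of every pair and the first appearance of every single vertex. The marks can be chosen in
at most `C(N,c) * C(2N,m-2c) < (2N)^(m-c)` ways. Call an edge of the clique spanned if its endpoints
are marked on edges built no later than the edge itself. For the pairing that minimizes the sum of
`2 ^ t` over the times `t` of the pair edges, no exchange of two vertices makes the pair edges
earlier. Hence an edge which is not spanned joins two pairs, and the edge joining the partners of
its endpoints is spanned, so at most half of the `2c(c-1)` edges between pairs are not spanned.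

For fixed marks, whether the edge of the next turn is spanned is known before its color is drawn.
Comparison with a Painter who is forced to use one color, of probability `q`, on spanned edges shows
that with probability at most `q ^ K` at least `K` spanned edges occur and all get that color. A
union bound over the marks and the two colors finishes the argument. Ramsey's theorem ensures that
the infimum defining `r̃(m,n;p)` is attained.
-/

section Ramsey

variable {V : Type*} {G : SimpleGraph V}

lemma exists_isNClique_succ_of_adj {v : V} {S S' : Finset V} {k : ℕ} (hv : v ∈ S) (hS' : S' ⊆ S)
    (hadj : ∀ u ∈ S', G.Adj v u) (h : ∃ T ⊆ S', G.IsNClique k T) :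
    ∃ T ⊆ S, G.IsNClique (k + 1) T := by
  obtain ⟨T, hT, hclique⟩ := h
  exact ⟨insert v T, Finset.insert_subset hv (hT.trans hS'),
    hclique.insert fun u hu => hadj u (hT hu)⟩

theorem exists_isNClique_or_compl_isNClique (G : SimpleGraph V) (m n : ℕ) (S : Finset V)
    (hS : (m + n).choose m ≤ S.card) :
    (∃ T ⊆ S, G.IsNClique m T) ∨ ∃ T ⊆ S, Gᶜ.IsNClique n T := by
  induction m generalizing n S with
  | zero => exact .inl ⟨∅, by simp⟩
  | succ m ihm =>
    induction n generalizing S with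
    | zero => exact .inr ⟨∅, by simp⟩
    | succ n ihn =>
      have hpascal : (m + 1 + (n + 1)).choose (m + 1) =
          (m + (n + 1)).choose m + (m + 1 + n).choose (m + 1) := by
        rw [add_right_comm m 1 (n + 1), Nat.choose_succ_succ]; congr 2; ring
      have hpos : 0 < (m + (n + 1)).choose m := Nat.choose_pos (by omega)
      obtain ⟨v, hv⟩ : S.Nonempty := Finset.card_pos.1 (by omega)
      have hsplit := Finset.card_filter_add_card_filter_not (s := S.erase v) (G.Adj v)
      rw [Finset.card_erase_of_mem hv] at hsplit
      set nbrs := (S.erase v).filter (G.Adj v)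
      set others := (S.erase v).filter (¬ G.Adj v ·)
      have hnbrs : nbrs ⊆ S := (Finset.filter_subset _ _).trans (Finset.erase_subset _ _)
      have hothers : others ⊆ S := (Finset.filter_subset _ _).trans (Finset.erase_subset _ _)
      by_cases hcard : (m + (n + 1)).choose m ≤ nbrs.card
      · refine (ihm (n + 1) nbrs hcard).imp (exists_isNClique_succ_of_adj hv hnbrs ?_) ?_
        · exact fun u hu => (Finset.mem_filter.1 hu).2
        · exact fun ⟨T, hT, hclique⟩ => ⟨T, hT.trans hnbrs, hclique⟩
      · refine (ihn others (by omega)).imp ?_ (exists_isNClique_succ_of_adj hv hothers ?_)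
        · exact fun ⟨T, hT, hclique⟩ => ⟨T, hT.trans hothers, hclique⟩
        · intro u hu
          obtain ⟨hne, hnadj⟩ := Finset.mem_filter.1 hu
          exact ⟨(Finset.ne_of_mem_erase hne).symm, hnadj⟩

lemma hasMonoClique_or_of_forall_exists {edge : ℕ → Sym2 V} (color : ℕ → Bool) {N m n : ℕ}
    {S : Finset V} (hS : (m + n).choose m ≤ S.card)
    (hedge : ∀ u ∈ S, ∀ v ∈ S, u ≠ v → ∃ t < N, edge t = s(u, v)) :
    HasMonoClique edge color N m true ∨ HasMonoClique edge color N n false := by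
  let red := SimpleGraph.fromEdgeSet {e | ∃ t < N, edge t = e ∧ color t = true}
  refine (exists_isNClique_or_compl_isNClique red m n S hS).imp ?_ ?_
  · rintro ⟨T, -, hT⟩
    exact ⟨T, hT.card_eq, fun u hu v hv huv => (hT.isClique hu hv huv).1⟩
  · rintro ⟨T, hTS, hT⟩
    refine ⟨T, hT.card_eq, fun u hu v hv huv => ?_⟩
    obtain ⟨t, ht, he⟩ := hedge u (hTS hu) v (hTS hv) huv
    have hnot : ¬ red.Adj u v := (hT.isClique hu hv huv).2
    refine ⟨t, ht, he, Bool.eq_false_iff.2 fun hred => hnot ?_⟩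
    exact ⟨⟨t, ht, he, hred⟩, huv⟩

end Ramsey

section RandomPainter

variable {p : ℝ} {N : ℕ}

/-- The probability with which the random Painter uses color `col`. -/
noncomputable def colorProb (p : ℝ) (col : Bool) : ℝ := if col then p else 1 - p

/-- The probability of the event `E` over `N` turns of the random Painter. Sequences are continued
by `extSeq`, so `E` should only depend on the first `N` colors. -/
noncomputable def prob (p : ℝ) (N : ℕ) (E : (ℕ → Bool) → Prop) : ℝ :=
  ∑ x : Fin N → Bool, weight p x * (if E (extSeq x) then 1 else 0)

lemma colorProb_mem_Icc (hp : p ∈ Set.Icc 0 1) (col : Bool) :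
    colorProb p col ∈ Set.Icc 0 1 := by
  cases col
  · exact ⟨sub_nonneg.2 hp.2, sub_le_self 1 hp.1⟩
  · exact hp

lemma weight_eq_prod_range (p : ℝ) (x : Fin N → Bool) :
    weight p x = ∏ t ∈ Finset.range N, colorProb p (extSeq x t) := by
  rw [← Fin.prod_univ_eq_prod_range]
  simp [weight, colorProb, extSeq]

lemma weight_nonneg (hp : p ∈ Set.Icc 0 1) (x : Fin N → Bool) : 0 ≤ weight p x :=
  Finset.prod_nonneg fun i _ => (colorProb_mem_Icc hp (x i)).1

lemma prob_le_sum {κ : Type*} (hp : p ∈ Set.Icc 0 1) {E : (ℕ → Bool) → Prop} (D : Finset κ)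
    (F : κ → (ℕ → Bool) → Prop) (hEF : ∀ x, E x → ∃ i ∈ D, F i x) :
    prob p N E ≤ ∑ i ∈ D, prob p N (F i) := by
  simp only [prob]
  rw [Finset.sum_comm]
  gcongr with x
  rw [← Finset.mul_sum]
  refine mul_le_mul_of_nonneg_left ?_ (weight_nonneg hp x)
  have hnonneg : ∀ i ∈ D, (0 : ℝ) ≤ if F i (extSeq x) then 1 else 0 := fun i _ => by positivity
  split_ifs with hE
  · obtain ⟨i, hi, hF⟩ := hEF _ hE
    simpa [hF] using Finset.single_le_sum hnonneg hi
  · exact Finset.sum_nonneg hnonneg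

lemma winProb_le_add (hp : p ∈ Set.Icc 0 1) (B : List Bool → Sym2 ℕ) (m n : ℕ) :
    winProb B m n N p ≤
      prob p N (fun x => HasMonoClique (fun t => B (histSeq x t)) x N m true) +
        prob p N (fun x => HasMonoClique (fun t => B (histSeq x t)) x N n false) := by
  have hunion := prob_le_sum (N := N) hp Finset.univ
    (fun col x => HasMonoClique (fun t => B (histSeq x t)) x N (cond col m n) col)
    (E := fun x => WinsOn B x m n N)
    fun _ hx => hx.elim (⟨true, Finset.mem_univ _, ·⟩) (⟨false, Finset.mem_univ _, ·⟩)
  rwa [Fintype.sum_bool] at hunion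

lemma histSeq_length (x : ℕ → Bool) (t : ℕ) : (histSeq x t).length = t := by
  simp [histSeq]

lemma histSeq_take (x : ℕ → Bool) {s t : ℕ} (h : s ≤ t) :
    (histSeq x t).take s = histSeq x s := by
  rw [histSeq, ← List.map_take, List.take_range, min_eq_left h, histSeq]

lemma extSeq_snoc_of_lt (x : Fin N → Bool) (b : Bool) {t : ℕ} (ht : t < N) :
    extSeq (Fin.snoc x b : Fin (N + 1) → Bool) t = extSeq x t := by
  simp [extSeq, Fin.snoc, ht, ht.trans N.lt_succ_self]

lemma extSeq_snoc_self (x : Fin N → Bool) (b : Bool) :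
    extSeq (Fin.snoc x b : Fin (N + 1) → Bool) N = b := by
  simp [extSeq, Fin.snoc]

lemma histSeq_extSeq_snoc (x : Fin N → Bool) (b : Bool) {t : ℕ} (ht : t ≤ N) :
    histSeq (extSeq (Fin.snoc x b : Fin (N + 1) → Bool)) t = histSeq (extSeq x) t :=
  List.map_congr_left fun _ hs => extSeq_snoc_of_lt x b ((List.mem_range.1 hs).trans_le ht)

lemma sum_prod_histSeq_eq_one (π : List Bool → Bool → ℝ) (hπ : ∀ h, ∑ b, π h b = 1) (N : ℕ) :
    ∑ x : Fin N → Bool,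
      ∏ t ∈ Finset.range N, π (histSeq (extSeq x) t) (extSeq x t) = 1 := by
  induction N with
  | zero => simp
  | succ N ih =>
    rw [← (Fin.snocEquiv fun _ : Fin (N + 1) => Bool).sum_comp, Fintype.sum_prod_type_right, ← ih]
    refine Finset.sum_congr rfl fun x _ => ?_
    have hsnoc (b : Bool) :
        ∏ t ∈ Finset.range (N + 1), π (histSeq (extSeq (Fin.snoc x b : Fin (N + 1) → Bool)) t)
          (extSeq (Fin.snoc x b : Fin (N + 1) → Bool) t) =
        (∏ t ∈ Finset.range N, π (histSeq (extSeq x) t) (extSeq x t)) *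
          π (histSeq (extSeq x) N) b := by
      rw [Finset.prod_range_succ, extSeq_snoc_self, histSeq_extSeq_snoc x b le_rfl]
      congr 1
      refine Finset.prod_congr rfl fun t ht => ?_
      have htN := Finset.mem_range.1 ht
      rw [extSeq_snoc_of_lt x b htN, histSeq_extSeq_snoc x b htN.le]
    calc _ = _ := Finset.sum_congr rfl fun b _ => hsnoc b
      _ = _ := by rw [← Finset.mul_sum, hπ, mul_one]

lemma sum_colorProb (p : ℝ) : ∑ b, colorProb p b = 1 := by
  simp [colorProb]

lemma sum_weight (p : ℝ) (N : ℕ) : ∑ x : Fin N → Bool, weight p x = 1 := by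
  simpa only [weight_eq_prod_range] using
    sum_prod_histSeq_eq_one (fun _ => colorProb p) (fun _ => sum_colorProb p) N

/-- The event that, among the first `N` turns, the ones whose history satisfies `C` are all colored
`col`, and there are at least `K` of them. -/
def MonoOnSelected (C : List Bool → Prop) (N K : ℕ) (col : Bool) (x : ℕ → Bool) : Prop :=
  (∀ t < N, C (histSeq x t) → x t = col) ∧
    K ≤ ((Finset.range N).filter fun t => C (histSeq x t)).card

/-- The Painter of `colorProb`, modified to use `col` at every turn whose history satisfies `C`. -/
noncomputable def forcedProb (p : ℝ) (C : List Bool → Prop) (col : Bool) (h : List Bool)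
    (b : Bool) : ℝ :=
  if C h then (if b = col then 1 else 0) else colorProb p b

lemma sum_forcedProb (p : ℝ) (C : List Bool → Prop) (col : Bool) (h : List Bool) :
    ∑ b, forcedProb p C col h b = 1 := by
  by_cases hC : C h <;> simp only [forcedProb, hC, if_true, if_false, sum_colorProb]
  exact Fintype.sum_ite_eq' col fun _ => (1 : ℝ)

lemma forcedProb_nonneg (hp : p ∈ Set.Icc 0 1) (C : List Bool → Prop) (col : Bool)
    (h : List Bool) (b : Bool) : 0 ≤ forcedProb p C col h b := by
  rw [forcedProb]
  split_ifs
  exacts [zero_le_one, le_rfl, (colorProb_mem_Icc hp b).1]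

-- On the event, each selected turn contributes `colorProb p col` to the density of the original
-- Painter with respect to the forced one.
lemma weight_le_mul_prod_forcedProb (hp : p ∈ Set.Icc 0 1) {C : List Bool → Prop} {K : ℕ}
    {col : Bool} {x : Fin N → Bool} (hx : MonoOnSelected C N K col (extSeq x)) :
    weight p x ≤ colorProb p col ^ K *
      ∏ t ∈ Finset.range N, forcedProb p C col (histSeq (extSeq x) t) (extSeq x t) := by
  obtain ⟨hcol, hK⟩ := hx
  have hfactor : ∀ t ∈ Finset.range N, colorProb p (extSeq x t) =
      (if C (histSeq (extSeq x) t) then colorProb p col else 1) *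
        forcedProb p C col (histSeq (extSeq x) t) (extSeq x t) := by
    intro t ht
    by_cases hC : C (histSeq (extSeq x) t)
    · simp [forcedProb, hC, hcol t (Finset.mem_range.1 ht) hC]
    · simp [forcedProb, hC]
  obtain ⟨hq0, hq1⟩ := colorProb_mem_Icc hp col
  rw [weight_eq_prod_range, Finset.prod_congr rfl hfactor, Finset.prod_mul_distrib,
    ← Finset.prod_filter, Finset.prod_const]
  exact mul_le_mul_of_nonneg_right (pow_le_pow_of_le_one hq0 hq1 hK)
    (Finset.prod_nonneg fun t _ => forcedProb_nonneg hp C col _ _)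

lemma prob_monoOnSelected_le (hp : p ∈ Set.Icc 0 1) (C : List Bool → Prop) (N K : ℕ)
    (col : Bool) : prob p N (MonoOnSelected C N K col) ≤ colorProb p col ^ K := by
  calc prob p N (MonoOnSelected C N K col)
      ≤ ∑ x : Fin N → Bool, colorProb p col ^ K *
          ∏ t ∈ Finset.range N, forcedProb p C col (histSeq (extSeq x) t) (extSeq x t) := by
        refine Finset.sum_le_sum fun x _ => ?_
        split_ifs with hx
        · simpa using weight_le_mul_prod_forcedProb hp hx
        · rw [mul_zero]
          exact mul_nonneg (pow_nonneg (colorProb_mem_Icc hp col).1 K)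
            (Finset.prod_nonneg fun t _ => forcedProb_nonneg hp C col _ _)
    _ = colorProb p col ^ K := by
        rw [← Finset.mul_sum, sum_prod_histSeq_eq_one _ (sum_forcedProb p C col), mul_one]

end RandomPainter

section Attainment

lemma exists_validBuilder_forall_winsOn (m n : ℕ) :
    ∃ N, ∃ B : List Bool → Sym2 ℕ, ValidBuilder B ∧ ∀ x, WinsOn B x m n N := by
  have : Infinite {e : Sym2 ℕ // ¬ e.IsDiag} :=
    Infinite.of_injective (fun k : ℕ => ⟨s(0, k + 1), by simp⟩) fun a b h => by simpa using h
  obtain ⟨enum⟩ : Nonempty (ℕ ≃ {e : Sym2 ℕ // ¬ e.IsDiag}) := nonempty_equiv_of_countable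
  let S := Finset.range ((m + n).choose m)
  let edges : Finset {e : Sym2 ℕ // ¬ e.IsDiag} := S.sym2.subtype _
  obtain ⟨N, hN⟩ := (edges.image enum.symm).exists_nat_subset_range
  refine ⟨N, fun h => enum h.length, ⟨fun h => (enum h.length).2, ?_⟩, fun x => ?_⟩
  · intro h i hi heq
    have hlen := enum.injective (Subtype.ext heq)
    rw [List.length_take] at hlen
    omega
  · refine hasMonoClique_or_of_forall_exists x (S := S) (Finset.card_range _).ge ?_
    intro u hu v hv huv
    let e : {e : Sym2 ℕ // ¬ e.IsDiag} := ⟨s(u, v), by simpa using huv⟩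
    have he : e ∈ edges := Finset.mem_subtype.2 (Finset.mk_mem_sym2_iff.2 ⟨hu, hv⟩)
    refine ⟨enum.symm e, Finset.mem_range.1 (hN (Finset.mem_image_of_mem _ he)), ?_⟩
    simp [histSeq_length, e]

lemma exists_validBuilder_half_le_winProb (m n : ℕ) (p : ℝ) :
    ∃ B, ValidBuilder B ∧ 1 / 2 ≤ winProb B m n (onlineRamseyP m n p) p := by
  refine Nat.sInf_mem (s := {N | ∃ B, ValidBuilder B ∧ 1 / 2 ≤ winProb B m n N p}) ?_
  obtain ⟨N, B, hB, hwin⟩ := exists_validBuilder_forall_winsOn m n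
  refine ⟨N, B, hB, ?_⟩
  simp only [winProb, hwin, if_true, mul_one, sum_weight]
  norm_num

end Attainment

section Pairing

variable {ι ρ α β : Type*}

/-- Index type for a vertex set split into pairs, indexed by `ι`, and unpaired vertices, indexed
by `ρ`. -/
abbrev PairedIndex (ι ρ : Type*) := (ι × Bool) ⊕ ρ

/-- The edge joining the two vertices of the pair `i`. -/
def pairEdge (i : ι) : Sym2 (PairedIndex ι ρ) := s(.inl (i, true), .inl (i, false))

/-- The involution exchanging the two vertices of every pair and fixing the unpaired vertices. -/
def partner : PairedIndex ι ρ → PairedIndex ι ρ := Sum.map (Prod.map id not) id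

/-- The edge `e` joins two different pairs. -/
def IsCross (e : Sym2 (PairedIndex ι ρ)) : Prop :=
  ∃ i j b b', i ≠ j ∧ e = s(.inl (i, b), .inl (j, b'))

/-- The edge `e` does not precede, in the order given by `T`, the pair edge at any of its
endpoints. -/
def IsLate [LE β] (T : Sym2 (PairedIndex ι ρ) → β) (e : Sym2 (PairedIndex ι ρ)) : Prop :=
  ∀ i b, .inl (i, b) ∈ e → T (pairEdge i) ≤ T e

/-- The pairing cannot be improved for the order `T` by exchanging a vertex of one pair with an
unpaired vertex or with a vertex of another pair. -/
structure IsExchangeMinimal [LinearOrder β] (T : Sym2 (PairedIndex ι ρ) → β) : Prop where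
  pair_le : ∀ i b a, T (pairEdge i) ≤ T s(.inl (i, b), .inr a)
  max_pair_le : ∀ i j, i ≠ j → ∀ b b', max (T (pairEdge i)) (T (pairEdge j)) ≤
    max (T s(.inl (i, b), .inl (j, b'))) (T s(.inl (i, !b), .inl (j, !b')))

lemma partner_involutive : Function.Involutive (partner (ι := ι) (ρ := ρ)) := by
  rintro (⟨i, b⟩ | a) <;> simp [partner]

lemma sym2_eq_pairEdge {i : ι} {b b' : Bool} (h : b ≠ b') :
    s(.inl (i, b), .inl (i, b')) = pairEdge (ρ := ρ) i := by
  cases b <;> cases b' <;> simp_all [pairEdge]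

lemma pairEdge_injective : Function.Injective (pairEdge (ι := ι) (ρ := ρ)) := by
  intro i j h
  simpa [pairEdge] using h

lemma IsCross.map_partner {e : Sym2 (PairedIndex ι ρ)} (he : IsCross e) :
    IsCross (e.map partner) := by
  obtain ⟨i, j, b, b', hij, rfl⟩ := he
  exact ⟨i, j, !b, !b', hij, rfl⟩

lemma IsCross.ne_pairEdge {e : Sym2 (PairedIndex ι ρ)} (he : IsCross e) (k : ι) :
    e ≠ pairEdge k := by
  obtain ⟨i, j, b, b', hij, rfl⟩ := he
  rw [pairEdge, Ne, Sym2.eq_iff]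
  grind

section Count

variable [LinearOrder β] {T : Sym2 (PairedIndex ι ρ) → β}

lemma IsExchangeMinimal.exists_of_not_isLate (hT : IsExchangeMinimal T)
    {e : Sym2 (PairedIndex ι ρ)} (hdiag : ¬ e.IsDiag) (he : ¬ IsLate T e) :
    ∃ i j b b', i ≠ j ∧ e = s(.inl (i, b), .inl (j, b')) ∧
      T e < max (T (pairEdge i)) (T (pairEdge j)) := by
  simp only [IsLate, not_forall, not_le] at he
  obtain ⟨i, b, ⟨y, rfl⟩, hlt⟩ := he
  rcases y with ⟨j, b'⟩ | a
  · refine ⟨i, j, b, b', ?_, rfl, hlt.trans_le (le_max_left _ _)⟩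
    rintro rfl
    have hbb' : b ≠ b' := by rintro rfl; simp at hdiag
    exact hlt.ne (congrArg T (sym2_eq_pairEdge hbb'))
  · exact absurd hlt (hT.pair_le i b a).not_gt

lemma IsExchangeMinimal.isCross_of_not_isLate (hT : IsExchangeMinimal T)
    {e : Sym2 (PairedIndex ι ρ)} (hdiag : ¬ e.IsDiag) (he : ¬ IsLate T e) : IsCross e := by
  obtain ⟨i, j, b, b', hij, heq, -⟩ := hT.exists_of_not_isLate hdiag he
  exact ⟨i, j, b, b', hij, heq⟩

lemma IsExchangeMinimal.isLate_map_partner (hT : IsExchangeMinimal T)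
    {e : Sym2 (PairedIndex ι ρ)} (hdiag : ¬ e.IsDiag) (he : ¬ IsLate T e) :
    IsLate T (e.map partner) := by
  obtain ⟨i, j, b, b', hij, rfl, hlt⟩ := hT.exists_of_not_isLate hdiag he
  have hle : max (T (pairEdge i)) (T (pairEdge j)) ≤ T s(.inl (i, !b), .inl (j, !b')) :=
    (le_max_iff.1 (hT.max_pair_le i j hij b b')).resolve_left hlt.not_ge
  intro k d hk
  simp only [partner, Sym2.map_mk, Sum.map_inl, Prod.map_apply, id_eq, Sym2.mem_iff, Sum.inl.injEq,
    Prod.mk.injEq] at hk ⊢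
  rcases hk with ⟨rfl, -⟩ | ⟨rfl, -⟩
  exacts [(le_max_left _ _).trans hle, (le_max_right _ _).trans hle]

variable [Fintype ι] [Fintype ρ]

lemma card_filter_not_isDiag (γ : Type*) [Fintype γ]
    [DecidablePred fun e : Sym2 γ => ¬ e.IsDiag] :
    (Finset.univ.filter fun e : Sym2 γ => ¬ e.IsDiag).card = (Fintype.card γ).choose 2 := by
  rw [← Sym2.card_subtype_not_diag, Fintype.card_subtype]

lemma choose_two_two_mul (k : ℕ) : (2 * k).choose 2 = 2 * (k * (k - 1)) + k := by
  rcases k with _ | k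
  · rfl
  · rw [Nat.choose_two_right, Nat.add_sub_cancel, show 2 * (k + 1) - 1 = 2 * k + 1 by omega,
      mul_assoc, Nat.mul_div_cancel_left _ two_pos]
    ring

lemma card_isCross_le :
    (Finset.univ.filter (IsCross (ι := ι) (ρ := ρ))).card ≤
      2 * (Fintype.card ι * (Fintype.card ι - 1)) := by
  set cross := Finset.univ.filter (IsCross (ι := ι) (ρ := ρ))
  let pairs : Finset (Sym2 (PairedIndex ι ρ)) := Finset.univ.image pairEdge
  let inner : Finset (Sym2 (PairedIndex ι ρ)) :=
    (Finset.univ.filter fun e : Sym2 (ι × Bool) => ¬ e.IsDiag).image (Sym2.map .inl)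
  have hpairs : pairs.card = Fintype.card ι := Finset.card_image_of_injective _ pairEdge_injective
  have hinner : inner.card = (2 * Fintype.card ι).choose 2 := by
    rw [Finset.card_image_of_injective _ (Sym2.map.injective Sum.inl_injective),
      card_filter_not_isDiag, Fintype.card_prod, Fintype.card_bool, mul_comm]
  have hdisj : Disjoint cross pairs := by
    rw [Finset.disjoint_left]
    intro e hcross hpair
    obtain ⟨k, -, rfl⟩ := Finset.mem_image.1 hpair
    exact (Finset.mem_filter.1 hcross).2.ne_pairEdge k rfl
  have mem_inner {u v : ι × Bool} (huv : u ≠ v) : s(.inl u, .inl v) ∈ inner :=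
    Finset.mem_image.2 ⟨s(u, v), by simpa using huv, rfl⟩
  have hsub : cross ∪ pairs ⊆ inner := by
    intro e he
    rcases Finset.mem_union.1 he with he | he
    · obtain ⟨i, j, b, b', hij, rfl⟩ := (Finset.mem_filter.1 he).2
      exact mem_inner (by simp [hij])
    · obtain ⟨i, -, rfl⟩ := Finset.mem_image.1 he
      exact mem_inner (by simp)
  have hcard := Finset.card_le_card hsub
  rw [Finset.card_union_of_disjoint hdisj, hpairs, hinner, choose_two_two_mul] at hcard
  omega

-- At most one of `e` and `e.map partner` is early, and both are cross edges.
lemma IsExchangeMinimal.card_not_isLate_le (hT : IsExchangeMinimal T) :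
    (Finset.univ.filter fun e => ¬ e.IsDiag ∧ ¬ IsLate T e).card ≤
      Fintype.card ι * (Fintype.card ι - 1) := by
  set early := Finset.univ.filter fun e => ¬ e.IsDiag ∧ ¬ IsLate T e
  let mates := early.image (Sym2.map partner)
  have hmates : mates.card = early.card :=
    Finset.card_image_of_injective _ (Sym2.map.injective partner_involutive.injective)
  have hdisj : Disjoint early mates := by
    rw [Finset.disjoint_left]
    intro e he hmate
    obtain ⟨e', he', rfl⟩ := Finset.mem_image.1 hmate
    obtain ⟨hdiag, hlate⟩ := (Finset.mem_filter.1 he').2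
    exact (Finset.mem_filter.1 he).2.2 (hT.isLate_map_partner hdiag hlate)
  have hcross {e} (he : e ∈ early) : IsCross e :=
    hT.isCross_of_not_isLate (Finset.mem_filter.1 he).2.1 (Finset.mem_filter.1 he).2.2
  have hsub : early ∪ mates ⊆ Finset.univ.filter IsCross := by
    intro e he
    refine Finset.mem_filter.2 ⟨Finset.mem_univ e, ?_⟩
    rcases Finset.mem_union.1 he with he | he
    · exact hcross he
    · obtain ⟨e', he', rfl⟩ := Finset.mem_image.1 he
      exact (hcross he').map_partner
  have hcard := (Finset.card_le_card hsub).trans card_isCross_le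
  rw [Finset.card_union_of_disjoint hdisj, hmates] at hcard
  omega

lemma IsExchangeMinimal.choose_two_le_card_isLate_add (hT : IsExchangeMinimal T) :
    (2 * Fintype.card ι + Fintype.card ρ).choose 2 ≤
      (Finset.univ.filter fun e => ¬ e.IsDiag ∧ IsLate T e).card +
        Fintype.card ι * (Fintype.card ι - 1) := by
  have hearly := hT.card_not_isLate_le
  have htotal := card_filter_not_isDiag (PairedIndex ι ρ)
  rw [← Finset.card_filter_add_card_filter_not (fun e => IsLate T e), Finset.filter_filter,
    Finset.filter_filter, Fintype.card_sum, Fintype.card_prod, Fintype.card_bool,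
    mul_comm _ 2] at htotal
  rw [← htotal]
  omega

end Count

section Existence

variable [Fintype ι]

/-- The potential minimized to choose the pairing. Powers of `2` make the latest pair edge outweigh
two edges that both precede it. -/
def pairCost (T : Sym2 (PairedIndex ι ρ) → ℕ) : ℕ := ∑ i, 2 ^ T (pairEdge i)

lemma sum_le_sum_of_eq_off {γ : Type*} [Fintype γ] {F G : γ → ℕ} (s : Finset γ)
    (heq : ∀ k ∉ s, F k = G k) (hle : ∑ k, F k ≤ ∑ k, G k) : ∑ k ∈ s, F k ≤ ∑ k ∈ s, G k := by
  rw [← Finset.sum_add_sum_compl s F, ← Finset.sum_add_sum_compl s G,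
    Finset.sum_congr rfl fun k hk => heq k (Finset.mem_compl.1 hk)] at hle
  exact Nat.le_of_add_le_add_right hle

lemma two_pow_add_two_pow_le_of_lt {x y w : ℕ} (hx : x < w) (hy : y < w) :
    2 ^ x + 2 ^ y ≤ 2 ^ w := by
  obtain ⟨v, rfl⟩ : ∃ v, w = v + 1 := ⟨w - 1, by omega⟩
  rw [pow_succ, mul_two]
  gcongr <;> omega

lemma max_le_max_of_two_pow_add_le {w w' x y : ℕ} (h : 2 ^ w + 2 ^ w' ≤ 2 ^ x + 2 ^ y) :
    max w w' ≤ max x y := by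
  by_contra! hlt
  have hle := two_pow_add_two_pow_le_of_lt (max_lt_iff.1 hlt).1 (max_lt_iff.1 hlt).2
  have hw := Nat.two_pow_pos w
  have hw' := Nat.two_pow_pos w'
  rcases max_choice w w' with h' | h' <;> rw [h'] at hle <;> omega

lemma isExchangeMinimal_of_forall_pairCost_le {T : Sym2 (PairedIndex ι ρ) → ℕ}
    (hT : ∀ g : Equiv.Perm (PairedIndex ι ρ), pairCost T ≤ pairCost fun e => T (e.map g)) :
    IsExchangeMinimal T where
  pair_le i b a := by
    have hle := sum_le_sum_of_eq_off {i}
      (fun k hk => by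
        rw [Finset.mem_singleton] at hk
        simp [pairEdge, Equiv.swap_apply_def, hk])
      (hT (Equiv.swap (.inl (i, !b)) (.inr a)))
    rw [Finset.sum_singleton, Finset.sum_singleton, Nat.pow_le_pow_iff_right one_lt_two] at hle
    cases b <;> simpa [pairEdge, Equiv.swap_apply_def, Sym2.eq_swap] using hle
  max_pair_le i j hij b b' := by
    have hle := sum_le_sum_of_eq_off {i, j}
      (fun k hk => by
        rw [Finset.mem_insert, Finset.mem_singleton, not_or] at hk
        simp [pairEdge, Equiv.swap_apply_def, hk.1, hk.2])
      (hT (Equiv.swap (.inl (i, !b)) (.inl (j, b'))))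
    rw [Finset.sum_pair hij, Finset.sum_pair hij] at hle
    refine max_le_max_of_two_pow_add_le (hle.trans_eq ?_)
    cases b <;> cases b' <;>
      simp [pairEdge, Equiv.swap_apply_def, hij, hij.symm, Sym2.eq_swap]

lemma exists_equiv_isExchangeMinimal [Fintype ρ] [Fintype α] (T : Sym2 α → ℕ)
    (hcard : Fintype.card α = 2 * Fintype.card ι + Fintype.card ρ) :
    ∃ f : PairedIndex ι ρ ≃ α, IsExchangeMinimal fun e => T (e.map f) := by
  have : Nonempty (PairedIndex ι ρ ≃ α) := by
    rw [← Fintype.card_eq, hcard, Fintype.card_sum, Fintype.card_prod, Fintype.card_bool, mul_comm]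
  obtain ⟨f, hf⟩ := Finite.exists_min fun f : PairedIndex ι ρ ≃ α =>
    pairCost fun e => T (e.map f)
  refine ⟨f, isExchangeMinimal_of_forall_pairCost_le fun g => ?_⟩
  simpa [Sym2.map_map] using hf (g.trans f)

end Existence

end Pairing

section Identification

variable {V : Type*} {edge : ℕ → Sym2 V}

/-- The two endpoints of `e`, indexed by `Bool` in an arbitrary order. -/
noncomputable def endpoint (e : Sym2 V) (b : Bool) : V := cond b (Quot.out e).1 (Quot.out e).2

lemma mem_iff_exists_endpoint_eq {e : Sym2 V} {v : V} : v ∈ e ↔ ∃ b, endpoint e b = v := by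
  have he : s((Quot.out e).1, (Quot.out e).2) = e := Quot.out_eq e
  conv_lhs => rw [← he, Sym2.mem_iff]
  simp [endpoint, eq_comm, or_comm]

/-- A mark `(s, b)` points at the endpoint `b` of the edge built at turn `s`. The edge built at
turn `t` is spanned by the marks `Q` if both its endpoints are marked by turns up to `t`. -/
def IsSpanned (edge : ℕ → Sym2 V) (Q : Finset (ℕ × Bool)) (t : ℕ) : Prop :=
  ∀ v ∈ edge t, ∃ q ∈ Q, q.1 ≤ t ∧ endpoint (edge q.1) q.2 = v

lemma isSpanned_congr {edge' : ℕ → Sym2 V} {t : ℕ} (h : ∀ s ≤ t, edge s = edge' s)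
    (Q : Finset (ℕ × Bool)) : IsSpanned edge Q t ↔ IsSpanned edge' Q t := by
  rw [IsSpanned, IsSpanned, h t le_rfl]
  refine forall₂_congr fun v _ => exists_congr fun q => and_congr_right fun _ =>
    and_congr_right fun hq => ?_
  rw [h _ hq]

/-- The sets of marks among the first `N` turns consisting of both endpoints of `c` edges and of
`r` further endpoints. -/
noncomputable def markSets (N c r : ℕ) : Finset (Finset (ℕ × Bool)) :=
  ((Finset.range N).powersetCard c ×ˢ
    (Finset.range N ×ˢ (Finset.univ : Finset Bool)).powersetCard r).image
      fun D => D.1 ×ˢ Finset.univ ∪ D.2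

lemma card_markSets_le (N c r : ℕ) :
    (markSets N c r).card ≤ N.choose c * (2 * N).choose r := by
  refine Finset.card_image_le.trans_eq ?_
  simp [mul_comm]

lemma union_mem_markSets {N c r : ℕ} {pairTime : Fin c → ℕ} {mark : Fin r → ℕ × Bool}
    (hpair : ∀ i, pairTime i < N) (hmark : ∀ a, (mark a).1 < N)
    (hpair_inj : Function.Injective pairTime) (hmark_inj : Function.Injective mark) :
    Finset.univ.image pairTime ×ˢ Finset.univ ∪ Finset.univ.image mark ∈ markSets N c r := by
  refine Finset.mem_image.2 ⟨(Finset.univ.image pairTime, Finset.univ.image mark),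
    Finset.mem_product.2 ⟨Finset.mem_powersetCard.2 ⟨?_, ?_⟩, Finset.mem_powersetCard.2 ⟨?_, ?_⟩⟩,
    rfl⟩
  · simpa [Finset.image_subset_iff] using hpair
  · rw [Finset.card_image_of_injective _ hpair_inj, Finset.card_fin]
  · simpa [Finset.image_subset_iff] using hmark
  · rw [Finset.card_image_of_injective _ hmark_inj, Finset.card_fin]

lemma exists_first_mark {v : V} {t : ℕ} (hv : v ∈ edge t) :
    ∃ q : ℕ × Bool, endpoint (edge q.1) q.2 = v ∧ ∀ s, v ∈ edge s → q.1 ≤ s := by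
  have hex : ∃ t, v ∈ edge t := ⟨t, hv⟩
  obtain ⟨b, hb⟩ := mem_iff_exists_endpoint_eq.1 (Nat.find_spec hex)
  exact ⟨(Nat.find hex, b), hb, fun _ hs => Nat.find_min' hex hs⟩

/-- `τ` gives, for every pair of vertices of `S`, the turn before `N` at which it is built, and the
edge gets color `col` at that turn. -/
def IsBuildTime (edge : ℕ → Sym2 V) (color : ℕ → Bool) (N : ℕ) (col : Bool) (S : Finset V)
    (τ : Sym2 S → ℕ) : Prop :=
  ∀ e, ¬ e.IsDiag → τ e < N ∧ edge (τ e) = e.map (↑) ∧ color (τ e) = col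

section BuildTime

variable {color : ℕ → Bool} {N : ℕ} {col : Bool} {S : Finset V} {τ : Sym2 S → ℕ}

lemma exists_isBuildTime
    (hS : ∀ u ∈ S, ∀ v ∈ S, u ≠ v → ∃ t, t < N ∧ edge t = s(u, v) ∧ color t = col) :
    ∃ τ, IsBuildTime edge color N col S τ := by
  have hex (e : Sym2 S) :
      ∃ t, ¬ e.IsDiag → t < N ∧ edge t = e.map (↑) ∧ color t = col := by
    induction e using Sym2.ind with
    | _ u v =>
      by_cases huv : u = v
      · exact ⟨0, fun hdiag => absurd (by simpa using huv) hdiag⟩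
      · obtain ⟨t, ht⟩ := hS u u.2 v v.2 (Subtype.coe_ne_coe.2 huv)
        exact ⟨t, fun _ => ht⟩
  choose τ hτ using hex
  exact ⟨τ, hτ⟩

lemma IsBuildTime.injOn (hτ : IsBuildTime edge color N col S τ) :
    Set.InjOn τ {e | ¬ e.IsDiag} := by
  intro e he e' he' h
  apply Sym2.map.injective Subtype.val_injective
  rw [← (hτ e he).2.1, ← (hτ e' he').2.1, h]

lemma IsBuildTime.color_eq (hτ : IsBuildTime edge color N col S τ)
    (hinj : Function.Injective edge) (hdiag : ∀ t, ¬ (edge t).IsDiag) {t : ℕ}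
    (hmem : ∀ v ∈ edge t, v ∈ S) : color t = col := by
  obtain ⟨e, he⟩ : ∃ e : Sym2 S, e.map (↑) = edge t := by
    generalize edge t = e at hmem
    induction e using Sym2.ind with
    | _ u v => exact ⟨s(⟨u, hmem u (by simp)⟩, ⟨v, hmem v (by simp)⟩), rfl⟩
  have hnd : ¬ e.IsDiag := by
    rw [← Sym2.isDiag_map Subtype.val_injective, he]
    exact hdiag t
  obtain ⟨-, hedge, hcol⟩ := hτ e hnd
  rwa [hinj (hedge.trans he)] at hcol

lemma IsBuildTime.exists_mem_edge (hτ : IsBuildTime edge color N col S τ) (hS : 2 ≤ S.card)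
    (v : S) : ∃ t < N, ↑v ∈ edge t := by
  obtain ⟨u, hu, huv⟩ := Finset.exists_mem_ne hS (v : V)
  obtain ⟨ht, hedge, -⟩ := hτ s(v, ⟨u, hu⟩) (by simpa [Subtype.ext_iff] using huv.symm)
  exact ⟨_, ht, by simp [hedge]⟩

/-- The set of marks determined by a pairing `f` of `S`: both endpoints of every pair edge, and
one mark `mark a` for every unpaired vertex. -/
noncomputable def pairingMarks {c r : ℕ} (τ : Sym2 S → ℕ)
    (f : PairedIndex (Fin c) (Fin r) → S) (mark : Fin r → ℕ × Bool) : Finset (ℕ × Bool) :=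
  Finset.univ.image (fun i => τ ((pairEdge i).map f)) ×ˢ Finset.univ ∪ Finset.univ.image mark

section PairingMarks

variable {c r : ℕ} {f : PairedIndex (Fin c) (Fin r) → S} {mark : Fin r → ℕ × Bool}

lemma not_isDiag_map_pairEdge (hf : Function.Injective f) (i : Fin c) :
    ¬ ((pairEdge i).map f).IsDiag := by
  rw [Sym2.isDiag_map hf]
  simp [pairEdge]

lemma IsBuildTime.pairingMarks_mem_markSets (hτ : IsBuildTime edge color N col S τ)
    (hf : Function.Injective f) (hmark : ∀ a, endpoint (edge (mark a).1) (mark a).2 = f (.inr a))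
    (hlt : ∀ a, (mark a).1 < N) : pairingMarks τ f mark ∈ markSets N c r := by
  have hnd := not_isDiag_map_pairEdge hf
  refine union_mem_markSets (fun i => (hτ _ (hnd i)).1) hlt (fun i j h => ?_) (fun a b h => ?_)
  · exact pairEdge_injective (Sym2.map.injective hf (hτ.injOn (hnd i) (hnd j) h))
  · have hab : f (.inr a) = f (.inr b) := Subtype.ext (by rw [← hmark a, ← hmark b, h])
    exact Sum.inr_injective (hf hab)

lemma IsBuildTime.mem_of_isSpanned (hτ : IsBuildTime edge color N col S τ)
    (hf : Function.Injective f) (hmark : ∀ a, endpoint (edge (mark a).1) (mark a).2 = f (.inr a))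
    {t : ℕ} (ht : IsSpanned edge (pairingMarks τ f mark) t) {v : V} (hv : v ∈ edge t) : v ∈ S := by
  obtain ⟨q, hq, -, rfl⟩ := ht v hv
  rcases Finset.mem_union.1 hq with hq | hq
  · obtain ⟨i, -, hi⟩ := Finset.mem_image.1 (Finset.mem_product.1 hq).1
    have hmem : ∀ w ∈ edge q.1, w ∈ S := by
      intro w hw
      rw [← hi, (hτ _ (not_isDiag_map_pairEdge hf i)).2.1] at hw
      obtain ⟨u, -, rfl⟩ := Sym2.mem_map.1 hw
      exact u.2
    exact hmem _ (mem_iff_exists_endpoint_eq.2 ⟨_, rfl⟩)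
  · obtain ⟨a, -, rfl⟩ := Finset.mem_image.1 hq
    rw [hmark]
    exact (f (.inr a)).2

lemma IsBuildTime.isSpanned_of_isLate (hτ : IsBuildTime edge color N col S τ)
    (hf : Function.Injective f) (hmark : ∀ a, endpoint (edge (mark a).1) (mark a).2 = f (.inr a))
    (hfirst : ∀ a s, ↑(f (.inr a)) ∈ edge s → (mark a).1 ≤ s)
    {e : Sym2 (PairedIndex (Fin c) (Fin r))} (hdiag : ¬ e.IsDiag)
    (hlate : IsLate (fun e => τ (e.map f)) e) :
    IsSpanned edge (pairingMarks τ f mark) (τ (e.map f)) := by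
  intro v hv
  obtain ⟨y, hy, rfl⟩ : ∃ y ∈ e, ↑(f y) = v := by
    rw [(hτ _ (by rwa [Sym2.isDiag_map hf])).2.1, Sym2.map_map] at hv
    exact Sym2.mem_map.1 hv
  rcases y with ⟨i, b⟩ | a
  · have hpair : ↑(f (.inl (i, b))) ∈ edge (τ ((pairEdge i).map f)) := by
      rw [(hτ _ (not_isDiag_map_pairEdge hf i)).2.1, Sym2.map_map]
      refine Sym2.mem_map.2 ⟨.inl (i, b), ?_, rfl⟩
      cases b <;> simp [pairEdge]
    obtain ⟨b', hb'⟩ := mem_iff_exists_endpoint_eq.1 hpair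
    refine ⟨(_, b'), Finset.mem_union_left _ (Finset.mem_product.2 ⟨?_, Finset.mem_univ _⟩),
      hlate i b hy, hb'⟩
    exact Finset.mem_image_of_mem _ (Finset.mem_univ i)
  · exact ⟨mark a, Finset.mem_union_right _ (Finset.mem_image_of_mem _ (Finset.mem_univ a)),
      hfirst a _ hv, hmark a⟩

end PairingMarks

end BuildTime

theorem exists_markSet_of_hasMonoClique {color : ℕ → Bool} {N c r : ℕ} {col : Bool}
    (hinj : Function.Injective edge) (hdiag : ∀ t, ¬ (edge t).IsDiag) (hm : 2 ≤ 2 * c + r)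
    (hclique : HasMonoClique edge color N (2 * c + r) col) :
    ∃ Q ∈ markSets N c r, (∀ t, IsSpanned edge Q t → color t = col) ∧
      (2 * c + r).choose 2 - c * (c - 1) ≤
        ((Finset.range N).filter (IsSpanned edge Q)).card := by
  obtain ⟨S, hS, hedge⟩ := hclique
  obtain ⟨τ, hτ⟩ := exists_isBuildTime hedge
  obtain ⟨f, hf⟩ := exists_equiv_isExchangeMinimal (ι := Fin c) (ρ := Fin r) τ (by simpa using hS)
  have hmarks (a : Fin r) : ∃ q : ℕ × Bool, q.1 < N ∧
      endpoint (edge q.1) q.2 = f (.inr a) ∧ ∀ s, ↑(f (.inr a)) ∈ edge s → q.1 ≤ s := by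
    obtain ⟨t, ht, hmem⟩ := hτ.exists_mem_edge (hm.trans_eq hS.symm) (f (.inr a))
    obtain ⟨q, hq, hfirst⟩ := exists_first_mark hmem
    exact ⟨q, (hfirst t hmem).trans_lt ht, hq, hfirst⟩
  choose mark hlt hmark hfirst using hmarks
  refine ⟨pairingMarks τ f mark, hτ.pairingMarks_mem_markSets f.injective hmark hlt,
    fun t ht => hτ.color_eq hinj hdiag fun v => hτ.mem_of_isSpanned f.injective hmark ht, ?_⟩
  have hcard := hf.choose_two_le_card_isLate_add
  rw [Fintype.card_fin, Fintype.card_fin] at hcard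
  refine (Nat.sub_le_iff_le_add.2 hcard).trans
    (Finset.card_le_card_of_injOn (fun e => τ (e.map f)) ?_ ?_)
  · intro e he
    simp only [Finset.coe_filter, Finset.mem_univ, true_and, Set.mem_ofPred_eq] at he
    exact Finset.mem_filter.2
      ⟨Finset.mem_range.2 (hτ _ ((Sym2.isDiag_map f.injective).not.2 he.1)).1,
        hτ.isSpanned_of_isLate f.injective hmark hfirst he.1 he.2⟩
  · rw [← Function.comp_def, Finset.coe_filter]
    exact hτ.injOn.comp ((Sym2.map.injective f.injective).injOn) fun e he =>
      (Sym2.isDiag_map f.injective).not.2 he.2.1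

end Identification

section CliqueBound

variable {B : List Bool → Sym2 ℕ} {p : ℝ} {col : Bool}

lemma ValidBuilder.injective_edge (hB : ValidBuilder B) (x : ℕ → Bool) :
    Function.Injective fun t => B (histSeq x t) := by
  intro s t heq
  by_contra hst
  wlog hlt : s < t generalizing s t
  · exact this heq.symm (Ne.symm hst) (by omega)
  have hne := hB.2 (histSeq x t) s (by rwa [histSeq_length])
  rw [histSeq_take x hlt.le] at hne
  exact hne heq

lemma isSpanned_histSeq_iff (B : List Bool → Sym2 ℕ) (x : ℕ → Bool) (Q : Finset (ℕ × Bool))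
    (t : ℕ) : IsSpanned (fun s => B ((histSeq x t).take s)) Q (histSeq x t).length ↔
      IsSpanned (fun s => B (histSeq x s)) Q t := by
  rw [histSeq_length]
  exact isSpanned_congr (fun s hs => by rw [histSeq_take x hs]) Q

lemma prob_hasMonoClique_le (hB : ValidBuilder B) (hp : p ∈ Set.Icc 0 1) {N c r : ℕ}
    (hm : 2 ≤ 2 * c + r) :
    prob p N (fun x => HasMonoClique (fun t => B (histSeq x t)) x N (2 * c + r) col) ≤
      (N.choose c * (2 * N).choose r : ℕ) *
        colorProb p col ^ ((2 * c + r).choose 2 - c * (c - 1)) := by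
  set K := (2 * c + r).choose 2 - c * (c - 1)
  let selected (Q : Finset (ℕ × Bool)) (h : List Bool) : Prop :=
    IsSpanned (fun s => B (h.take s)) Q h.length
  have hcover (x : ℕ → Bool)
      (hx : HasMonoClique (fun t => B (histSeq x t)) x N (2 * c + r) col) :
      ∃ Q ∈ markSets N c r, MonoOnSelected (selected Q) N K col x := by
    obtain ⟨Q, hQ, hcol, hcard⟩ :=
      exists_markSet_of_hasMonoClique (hB.injective_edge x) (fun t => hB.1 _) hm hx
    refine ⟨Q, hQ, ?_⟩
    simpa only [MonoOnSelected, selected, isSpanned_histSeq_iff] using ⟨fun t _ => hcol t, hcard⟩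
  calc _ ≤ ∑ Q ∈ markSets N c r, prob p N (MonoOnSelected (selected Q) N K col) :=
        prob_le_sum hp _ _ hcover
    _ ≤ (markSets N c r).card • colorProb p col ^ K :=
        Finset.sum_le_card_nsmul _ _ _ fun Q _ => prob_monoOnSelected_le hp _ _ _ _
    _ ≤ _ := by
        rw [nsmul_eq_mul]
        gcongr
        · exact pow_nonneg (colorProb_mem_Icc hp col).1 K
        · exact card_markSets_le N c r

lemma choose_lt_pow {a r : ℕ} (ha : 0 < a) (hr : 2 ≤ r) : a.choose r < a ^ r := by
  have hfact := (Nat.descFactorial_eq_factorial_mul_choose a r).symm.trans_le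
    (Nat.descFactorial_le_pow a r)
  have htwo : 2 ≤ r.factorial := hr.trans (Nat.self_le_factorial r)
  have hpos : 0 < a ^ r := Nat.pow_pos ha
  nlinarith

lemma choose_mul_choose_lt {N c r : ℕ} (hN : 1 ≤ N) (hm : 2 ≤ 2 * c + r) :
    N.choose c * (2 * N).choose r < (2 * N) ^ (c + r) := by
  rcases Nat.eq_zero_or_pos c with rfl | hc
  · simpa using choose_lt_pow (by omega : 0 < 2 * N) (by omega : 2 ≤ r)
  · rw [pow_add]
    exact Nat.mul_lt_mul_of_lt_of_le
      ((Nat.choose_le_pow N c).trans_lt (Nat.pow_lt_pow_left (by omega) hc.ne'))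
      (Nat.choose_le_pow _ _) (Nat.pow_pos (by omega))

lemma mul_pred_le_choose_two (c r : ℕ) : c * (c - 1) ≤ (2 * c + r).choose 2 := by
  have hmono : (2 * c).choose 2 ≤ (2 * c + r).choose 2 := Nat.choose_le_choose 2 (by omega)
  rw [choose_two_two_mul] at hmono
  omega

/-- The summand `q ^ (C(m,2) - c(c-1)) * (2N) ^ (m - c)`, which bounds the probability of a
monochromatic clique on `m` vertices in a color of probability `q`. -/
noncomputable def cliqueBound (q : ℝ) (m c N : ℕ) : ℝ :=
  q ^ ((m.choose 2 : ℝ) - (c : ℝ) * ((c : ℝ) - 1)) * ((2 * N : ℕ) : ℝ) ^ ((m : ℝ) - (c : ℝ))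

lemma cliqueBound_nonneg {q : ℝ} (hq : 0 ≤ q) (m c N : ℕ) : 0 ≤ cliqueBound q m c N :=
  mul_nonneg (Real.rpow_nonneg hq _) (Real.rpow_nonneg (Nat.cast_nonneg _) _)

lemma cliqueBound_two_mul_add (q : ℝ) (c r N : ℕ) :
    cliqueBound q (2 * c + r) c N =
      q ^ ((2 * c + r).choose 2 - c * (c - 1)) * ((2 * N : ℕ) : ℝ) ^ (c + r) := by
  have hedges : ((2 * c + r).choose 2 : ℝ) - (c : ℝ) * ((c : ℝ) - 1) =
      ((2 * c + r).choose 2 - c * (c - 1) : ℕ) := by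
    rw [Nat.cast_sub (mul_pred_le_choose_two c r)]
    cases c <;> simp
  have hmarks : ((2 * c + r : ℕ) : ℝ) - (c : ℝ) = (c + r : ℕ) := by push_cast; ring
  rw [cliqueBound, hedges, hmarks, Real.rpow_natCast, Real.rpow_natCast]

lemma two_mul_le_of_cast_le_half {m c : ℕ} (hc : (c : ℝ) ≤ (m : ℝ) / 2) : 2 * c ≤ m := by
  have hc' : (2 * c : ℝ) ≤ m := by linarith
  exact_mod_cast hc'

lemma two_le_of_cliqueBound_le_half {q : ℝ} {m c N : ℕ} (hm : 1 ≤ m) (hN : 1 ≤ N)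
    (hc : 2 * c ≤ m) (hle : cliqueBound q m c N ≤ 1 / 2) : 2 ≤ m := by
  by_contra! hlt
  obtain ⟨rfl, rfl⟩ : m = 1 ∧ c = 0 := by omega
  have hN' : (1 : ℝ) ≤ N := by exact_mod_cast hN
  have hval : cliqueBound q 1 0 N = 2 * N := by simp [cliqueBound]
  linarith

lemma prob_hasMonoClique_lt (hB : ValidBuilder B) (hp : p ∈ Set.Icc 0 1)
    (hq : 0 < colorProb p col) {M N m c : ℕ} (hMN : M ≤ N) (hN : 1 ≤ N) (hm : 2 ≤ m)
    (hc : 2 * c ≤ m) :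
    prob p M (fun x => HasMonoClique (fun t => B (histSeq x t)) x M m col) <
      cliqueBound (colorProb p col) m c N := by
  obtain ⟨r, rfl⟩ := Nat.exists_eq_add_of_le hc
  refine (prob_hasMonoClique_le hB hp hm).trans_lt ?_
  rw [cliqueBound_two_mul_add, mul_comm]
  refine mul_lt_mul_of_pos_left ?_ (pow_pos hq _)
  calc ((M.choose c * (2 * M).choose r : ℕ) : ℝ) ≤ (N.choose c * (2 * N).choose r : ℕ) := by
        gcongr
    _ < ((2 * N : ℕ) : ℝ) ^ (c + r) := by exact_mod_cast choose_mul_choose_lt hN hm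

end CliqueBound

theorem stmt11 (m n N : ℕ) (p : ℝ) (hm : 1 ≤ m) (hn : 1 ≤ n) (hN : 1 ≤ N)
    (hp : p ∈ Set.Ioo (0 : ℝ) 1)
    (h : ∃ c d : ℕ, (c : ℝ) ≤ (m : ℝ) / 2 ∧ (d : ℝ) ≤ (n : ℝ) / 2 ∧
      p ^ ((m.choose 2 : ℝ) - (c : ℝ) * ((c : ℝ) - 1)) * ((2 * N : ℕ) : ℝ) ^ ((m : ℝ) - (c : ℝ)) +
        (1 - p) ^ ((n.choose 2 : ℝ) - (d : ℝ) * ((d : ℝ) - 1)) *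
          ((2 * N : ℕ) : ℝ) ^ ((n : ℝ) - (d : ℝ)) ≤ 1 / 2) :
    N < onlineRamseyP m n p := by
  obtain ⟨c, d, hc, hd, hle⟩ := h
  have hp' := Set.Ioo_subset_Icc_self hp
  have hp1 : 0 < 1 - p := sub_pos.2 hp.2
  replace hc := two_mul_le_of_cast_le_half hc
  replace hd := two_mul_le_of_cast_le_half hd
  change cliqueBound p m c N + cliqueBound (1 - p) n d N ≤ 1 / 2 at hle
  have hred := cliqueBound_nonneg hp.1.le m c N
  have hblue := cliqueBound_nonneg hp1.le n d N
  have hm2 : 2 ≤ m :=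
    two_le_of_cliqueBound_le_half hm hN hc ((le_add_of_nonneg_right hblue).trans hle)
  have hn2 : 2 ≤ n :=
    two_le_of_cliqueBound_le_half hn hN hd ((le_add_of_nonneg_left hred).trans hle)
  by_contra! hMN
  obtain ⟨B, hB, hwin⟩ := exists_validBuilder_half_le_winProb m n p
  have hunion := winProb_le_add (N := onlineRamseyP m n p) hp' B m n
  have hred_lt := prob_hasMonoClique_lt (col := true) hB hp' hp.1 hMN hN hm2 hc
  have hblue_lt := prob_hasMonoClique_lt (col := false) hB hp' hp1 hMN hN hn2 hd
  exact (hwin.trans hunion).not_gt ((add_lt_add hred_lt hblue_lt).trans_le hle)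

end OnlineRamseyGame
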